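/- arXiv:1710.00374 — 2 statements merged into one kernel-verified Lean document; each statement's English description precedes it below -/
import Mathlib

section
/- Let ℓ ≥ 2 and let F be any (0,1)-matrix with exactly two columns. Then there is a constant c such that for all m ≥ 1, forb(m, 3, (𝒯_ℓ(3) \ 𝒯_ℓ(2)) ∪ {F}) ≤ c · Σ_{k=0}^{m} forbmax_k(m, F). -/
/-- A matrix with natural number entries, of size `k × p`. -/
abbrev MatN (k p : ℕ) := Matrix (Fin k) (Fin p) ℕ

/-- A matrix bundled with its dimensions. -/
structure CMat where
  rows : ℕ
  cols : ℕ
  mat : MatN rows cols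

/-- A matrix is simple if no two of its columns are equal. -/
def SimpleM {m n : ℕ} (A : MatN m n) : Prop :=
  ∀ j₁ j₂ : Fin n, (∀ i, A i j₁ = A i j₂) → j₁ = j₂

/-- An `r`-matrix: all entries lie in `{0, 1, …, r-1}`. -/
def RMat (r : ℕ) {m n : ℕ} (A : MatN m n) : Prop := ∀ i j, A i j < r

/-- `F` is a configuration of `A` (written `F ≺ A`): some submatrix of `A` is a row
and column permutation of `F`; equivalently there are injections of the rows and
columns of `F` into those of `A` realizing the entries of `F`. -/
def IsConfig {k p m n : ℕ} (F : MatN k p) (A : MatN m n) : Prop :=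
  ∃ f : Fin k → Fin m, ∃ g : Fin p → Fin n,
    Function.Injective f ∧ Function.Injective g ∧ ∀ i j, A (f i) (g j) = F i j

/-- `A` avoids every matrix of the family `𝓕` as a configuration. -/
def AvoidsFam {m n : ℕ} (A : MatN m n) (𝓕 : Set CMat) : Prop :=
  ∀ F ∈ 𝓕, ¬ IsConfig F.mat A

/-- `forb m r 𝓕`: the maximum number of columns of an `m`-rowed simple `r`-matrix
having no member of `𝓕` as a configuration. -/
noncomputable def forb (m r : ℕ) (𝓕 : Set CMat) : ℕ :=
  sSup { n : ℕ | ∃ A : MatN m n, RMat r A ∧ SimpleM A ∧ AvoidsFam A 𝓕 }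

/-- `forbmax m r 𝓕`: the maximum of `forb m' r 𝓕` over `m' ≤ m`. -/
noncomputable def forbmax (m r : ℕ) (𝓕 : Set CMat) : ℕ :=
  sSup { x : ℕ | ∃ m' ≤ m, x = forb m' r 𝓕 }

/-- The number of 1's in column `j` of `A` (the column sum). -/
def colSum {m n : ℕ} (A : MatN m n) (j : Fin n) : ℕ :=
  (Finset.univ.filter (fun i => A i j = 1)).card

/-- `forbK k m r 𝓕`: as `forb`, but restricted to matrices all of whose columns
have exactly `k` entries equal to 1. -/
noncomputable def forbK (k m r : ℕ) (𝓕 : Set CMat) : ℕ :=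
  sSup { n : ℕ | ∃ A : MatN m n, RMat r A ∧ SimpleM A ∧ (∀ j, colSum A j = k) ∧
    AvoidsFam A 𝓕 }

/-- `forbmaxK k m r 𝓕`: the maximum of `forbK k m' r 𝓕` over `m' ≤ m`. -/
noncomputable def forbmaxK (k m r : ℕ) (𝓕 : Set CMat) : ℕ :=
  sSup { x : ℕ | ∃ m' ≤ m, x = forbK k m' r 𝓕 }

/-- `Imat ℓ a b`: the `ℓ × ℓ` matrix with `a` on the diagonal and `b` off the diagonal. -/
def Imat (ℓ a b : ℕ) : MatN ℓ ℓ := fun i j => if i = j then a else b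

/-- `Tmat ℓ a b`: the `ℓ × ℓ` matrix with `a` below the diagonal and `b` on or above it. -/
def Tmat (ℓ a b : ℕ) : MatN ℓ ℓ := fun i j => if (j : ℕ) < (i : ℕ) then a else b

/-- `Tmat3 ℓ a b c`: the `ℓ × ℓ` matrix with `a` below, `b` on, and `c` above the diagonal. -/
def Tmat3 (ℓ a b c : ℕ) : MatN ℓ ℓ :=
  fun i j => if (j : ℕ) < (i : ℕ) then a else if i = j then b else c

/-- The family `𝒯_ℓ(r)` of all `I_ℓ(a,b)` and `T_ℓ(a,b)` with `a,b ∈ {0,…,r-1}`, `a ≠ b`. -/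
def TFam (ℓ r : ℕ) : Set CMat :=
  { M | ∃ a b : ℕ, a < r ∧ b < r ∧ a ≠ b ∧
      (M = ⟨ℓ, ℓ, Imat ℓ a b⟩ ∨ M = ⟨ℓ, ℓ, Tmat ℓ a b⟩) }

/-- `t·F`: the concatenation of `t` copies of `F` side by side. -/
def tcopies {k p : ℕ} (t : ℕ) (F : MatN k p) : MatN k (t * p) :=
  fun i j => F i ⟨(j : ℕ) % p, Nat.mod_lt _ (by
    rcases Nat.eq_zero_or_pos p with h | h
    · exact absurd j.isLt (by simp [h])
    · exact h)⟩

/-- `0×1×F`: `F` with an extra row of 0's and an extra row of 1's appended. -/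
def zeroOneTop {k p : ℕ} (F : MatN k p) : MatN (k + 2) p :=
  fun i j => if h : (i : ℕ) < k then F ⟨i, h⟩ j else if (i : ℕ) = k then 0 else 1

/-- `F_{a,b,c,d}`: the `(a+b+c+d) × 2` matrix with `a` rows `[1 1]`, `b` rows `[1 0]`,
`c` rows `[0 1]` and `d` rows `[0 0]`. -/
def Fabcd (a b c d : ℕ) : MatN (a + b + c + d) 2 :=
  fun i j =>
    if (i : ℕ) < a then 1
    else if (i : ℕ) < a + b then (if (j : ℕ) = 0 then 1 else 0)
    else if (i : ℕ) < a + b + c then (if (j : ℕ) = 0 then 0 else 1)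
    else 0

/-! ### Ramsey's theorem for increasing lists -/

theorem ramseyList (κ : Type) [Fintype κ] [DecidableEq κ] [Nonempty κ] (k : ℕ) :
    ∀ L : ℕ, ∃ n : ℕ, ∀ S : Finset ℕ, n ≤ S.card → ∀ f : List ℕ → κ,
      ∃ T ⊆ S, L ≤ T.card ∧ ∃ x, ∀ l : List ℕ, l.length = k → l.Pairwise (· < ·) →
        (∀ a ∈ l, a ∈ T) → f l = x := by
  induction k with
  | zero =>
    intro L
    refine ⟨L, fun S hS f => ⟨S, subset_rfl, hS, f [], ?_⟩⟩
    intro l hl _ _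
    rw [List.length_eq_zero_iff.1 hl]
  | succ k ih =>
    have Q : ∀ t : ℕ, ∃ n : ℕ, ∀ S : Finset ℕ, n ≤ S.card → ∀ f : List ℕ → κ,
        ∃ T ⊆ S, t ≤ T.card ∧ ∃ h : ℕ → κ, ∀ v l, l.length = k → (v :: l).Pairwise (· < ·) →
          (∀ a ∈ v :: l, a ∈ T) → f (v :: l) = h v := by
      intro t
      induction t with
      | zero =>
        refine ⟨0, fun S _ f => ⟨∅, by simp, by simp, fun _ => Classical.arbitrary κ, ?_⟩⟩
        intro v l _ _ h
        simpa using h v (by simp)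
      | succ t iht =>
        obtain ⟨n, hn⟩ := iht
        obtain ⟨N, hN⟩ := ih n
        refine ⟨N + 1, fun S hS f => ?_⟩
        have hne : S.Nonempty := Finset.card_pos.1 (by omega)
        set v := S.min' hne with hv
        have hvS : v ∈ S := S.min'_mem hne
        obtain ⟨S1, hS1, hc1, x, hx⟩ := hN (S.erase v)
          (by rw [Finset.card_erase_of_mem hvS]; omega) (fun l => f (v :: l))
        obtain ⟨T, hT, hcT, h, hh⟩ := hn S1 hc1 f
        have hvT : v ∉ T := fun h => by simpa using hS1 (hT h)
        have hlt : ∀ a ∈ T, v < a := by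
          intro a ha
          have h1 := hS1 (hT ha)
          have h2 := S.min'_le a (Finset.mem_of_mem_erase h1)
          have h3 := Finset.ne_of_mem_erase h1
          omega
        refine ⟨insert v T, ?_, ?_, Function.update h v x, ?_⟩
        · intro a ha
          rcases Finset.mem_insert.1 ha with rfl | ha
          · exact hvS
          · exact Finset.mem_of_mem_erase (hS1 (hT ha))
        · rw [Finset.card_insert_of_notMem hvT]; omega
        · intro u l hl hp hm
          have hp' := List.pairwise_cons.1 hp
          have hlT : ∀ a ∈ l, a ∈ T := by
            intro a ha
            have h1 := hp'.1 a ha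
            rcases Finset.mem_insert.1 (hm a (by simp [ha])) with h2 | h2
            · exfalso
              rcases Finset.mem_insert.1 (hm u (by simp)) with h3 | h3
              · omega
              · have := hlt u h3
                omega
            · exact h2
          rcases Finset.mem_insert.1 (hm u (by simp)) with h3 | h3
          · subst h3
            rw [Function.update_self]
            exact hx l hl hp'.2 (fun a ha => hT (hlT a ha))
          · have : u ≠ v := fun e => hvT (e ▸ h3)
            rw [Function.update_of_ne this]
            apply hh u l hl hp
            intro a ha
            rcases List.mem_cons.1 ha with rfl | ha
            · exact h3
            · exact hlT a ha
    intro L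
    obtain ⟨n, hn⟩ := Q (Fintype.card κ * L)
    refine ⟨n, fun S hS f => ?_⟩
    obtain ⟨T, hT, hc, h, hh⟩ := hn S hS f
    obtain ⟨x, -, hx⟩ := Finset.exists_le_card_fiber_of_mul_le_card_of_maps_to
      (s := T) (t := Finset.univ) (f := h) (n := L) (by simp) ⟨Classical.arbitrary κ, by simp⟩
      (by simpa using hc)
    refine ⟨T.filter (fun a => h a = x), (Finset.filter_subset _ _).trans hT, hx, x, ?_⟩
    intro l hl hp hm
    cases l with
    | nil => simp at hl
    | cons v l =>
      rw [hh v l (by simpa using hl) hp (fun a ha => (Finset.mem_filter.1 (hm a ha)).1)]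
      exact (Finset.mem_filter.1 (hm v (by simp))).2

/-- Ramsey for triples, with the homogeneous set listed in increasing order. -/
theorem ramseyTriple (κ : Type) [Fintype κ] [DecidableEq κ] [Nonempty κ] (L : ℕ) :
    ∃ n : ℕ, ∀ c : ℕ → ℕ → ℕ → κ, ∃ g : ℕ → ℕ, (∀ i < L, g i < n) ∧
      (∀ i j, i < j → j < L → g i < g j) ∧ ∃ x, ∀ i j k, i < j → j < k → k < L →
        c (g i) (g j) (g k) = x := by
  obtain ⟨n, hn⟩ := ramseyList κ 3 L
  refine ⟨n, fun c => ?_⟩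
  obtain ⟨T, hT, hc, x, hx⟩ := hn (Finset.range n) (by simp)
    (fun l => c (l.getD 0 0) (l.getD 1 0) (l.getD 2 0))
  obtain ⟨T', hT', hc'⟩ := Finset.exists_subset_card_eq hc
  let e := T'.orderEmbOfFin hc'
  let g : ℕ → ℕ := fun i => if h : i < L then e ⟨i, h⟩ else 0
  have hg : ∀ i (h : i < L), g i = e ⟨i, h⟩ := fun i h => by simp [g, h]
  have hm : ∀ i, i < L → g i ∈ T' := fun i h => by
    rw [hg i h]; exact Finset.orderEmbOfFin_mem _ _ _
  have hlt : ∀ i j, i < j → j < L → g i < g j := by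
    intro i j hij hj
    rw [hg i (by omega), hg j hj]
    exact e.strictMono (by simpa using hij)
  refine ⟨g, fun i hi => by simpa using hT (hT' (hm i hi)), hlt, x, ?_⟩
  intro i j k hij hjk hk
  have := hx [g i, g j, g k] rfl (by
    simp [hlt i j hij (by omega), hlt j k hjk hk, hlt i k (by omega) hk]) (by
    intro a ha
    simp at ha
    rcases ha with rfl | rfl | rfl
    · exact hT' (hm i (by omega))
    · exact hT' (hm j (by omega))
    · exact hT' (hm k (by omega)))
  simpa using this

/-! ### Sequences of columns -/

/-- The rows in which columns `s`, `t` carry the entries `a`, `b`. -/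
def pairRows {m : ℕ} (v : ℕ → Fin m → Fin 3) (s t : ℕ) (a b : Fin 3) : Finset (Fin m) :=
  Finset.univ.filter (fun x => v s x = a ∧ v t x = b)

/-- The avoidance conditions for the sequence of columns `v 0, …, v (n-1)`. -/
structure GoodSeq (ℓ r n : ℕ) {m : ℕ} (v : ℕ → Fin m → Fin 3) : Prop where
  noI : ∀ a b : Fin 3, a ≠ b → (a = 2 ∨ b = 2) → ∀ (f : ℕ → Fin m) (g : ℕ → ℕ),
    (∀ i < ℓ, g i < n) → ¬ ∀ i < ℓ, ∀ j < ℓ, v (g j) (f i) = if i = j then a else b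
  noT : ∀ a b : Fin 3, a ≠ b → (a = 2 ∨ b = 2) → ∀ (f : ℕ → Fin m) (g : ℕ → ℕ),
    (∀ i < ℓ, g i < n) → ¬ ∀ i < ℓ, ∀ j < ℓ, v (g j) (f i) = if j < i then a else b
  noF : ∀ s t, s < n → t < n → s ≠ t → r ≤ (pairRows v s t 1 1).card →
    r ≤ (pairRows v s t 1 0).card → r ≤ (pairRows v s t 0 1).card →
    r ≤ (pairRows v s t 0 0).card → False
  ones : ∀ s t, s < n → t < n → (Finset.univ.filter (fun x => v s x = 1)).card =
    (Finset.univ.filter (fun x => v t x = 1)).card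

theorem GoodSeq.comp {ℓ r n m N : ℕ} {v : ℕ → Fin m → Fin 3} (h : GoodSeq ℓ r n v) (g : ℕ → ℕ)
    (hg : ∀ i < N, g i < n) (hi : ∀ i j, i < N → j < N → i ≠ j → g i ≠ g j) :
    GoodSeq ℓ r N (fun i => v (g i)) where
  noI a b hab h2 f g' hg' := h.noI a b hab h2 f (fun i => g (g' i)) (fun i hi => hg _ (hg' i hi))
  noT a b hab h2 f g' hg' := h.noT a b hab h2 f (fun i => g (g' i)) (fun i hi => hg _ (hg' i hi))
  noF s t hs ht hst := h.noF (g s) (g t) (hg s hs) (hg t ht) (hi s t hs ht hst)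
  ones s t hs ht := h.ones (g s) (g t) (hg s hs) (hg t ht)

/-- Homogeneity of a choice of rows `ρ i j` for the pairs `i < j`. -/
structure Homog {m : ℕ} (M : ℕ) (v : ℕ → Fin m → Fin 3) (ρ : ℕ → ℕ → Fin m)
    (w α u β y : Fin 3) : Prop where
  before : ∀ i j k, i < j → j < k → k < M → v i (ρ j k) = w
  between : ∀ i j k, i < j → j < k → k < M → v j (ρ i k) = u
  after : ∀ i j k, i < j → j < k → k < M → v k (ρ i j) = y
  left : ∀ i j, i < j → j < M → v i (ρ i j) = α
  right : ∀ i j, i < j → j < M → v j (ρ i j) = β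

theorem exists_homog (M : ℕ) : ∃ n : ℕ, ∀ (m : ℕ) (v : ℕ → Fin m → Fin 3) (ρ : ℕ → ℕ → Fin m),
    ∃ g : ℕ → ℕ, (∀ i < M, g i < n) ∧ (∀ i j, i < j → j < M → g i < g j) ∧
      ∃ w α u β y, Homog M (fun i => v (g i)) (fun i j => ρ (g i) (g j)) w α u β y := by
  obtain ⟨n, hn⟩ := ramseyTriple (Fin 3 × Fin 3 × Fin 3 × Fin 3 × Fin 3) (M + 1)
  refine ⟨n, fun m v ρ => ?_⟩
  obtain ⟨g, hg, hlt, ⟨w, α, u, β, y⟩, hx⟩ := hn (fun i j k =>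
    (v i (ρ j k), v i (ρ i j), v j (ρ i k), v j (ρ i j), v k (ρ i j)))
  simp only [Prod.mk.injEq] at hx
  refine ⟨g, fun i hi => hg i (by omega), fun i j hij hj => hlt i j hij (by omega),
    w, α, u, β, y, ?_, ?_, ?_, ?_, ?_⟩
  · exact fun i j k h1 h2 h3 => (hx i j k h1 h2 (by omega)).1
  · exact fun i j k h1 h2 h3 => (hx i j k h1 h2 (by omega)).2.2.1
  · exact fun i j k h1 h2 h3 => (hx i j k h1 h2 (by omega)).2.2.2.2
  · exact fun i j h1 h2 => (hx i j (j + 1) h1 (by omega) (by omega)).2.1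
  · exact fun i j h1 h2 => (hx i j (j + 1) h1 (by omega) (by omega)).2.2.2.1

/-- The triangular pattern inside a homogeneous choice of rows. -/
theorem Homog.tri {m M : ℕ} {v : ℕ → Fin m → Fin 3} {ρ : ℕ → ℕ → Fin m}
    {w α u β y : Fin 3} (h : Homog M v ρ w α u β y) (i j : ℕ) (hi : 3 * i + 3 ≤ M)
    (hj : 3 * j + 3 ≤ M) :
    v (3 * j + 2) (ρ (3 * i) (3 * i + 1)) = if j < i then w else y := by
  split_ifs with hji
  · exact h.before _ _ _ (by omega) (by omega) (by omega)
  · exact h.after _ _ _ (by omega) (by omega) (by omega)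

theorem Homog.pattern {ℓ r m M : ℕ} {v : ℕ → Fin m → Fin 3} {ρ : ℕ → ℕ → Fin m}
    {w α u β y : Fin 3} (h : Homog M v ρ w α u β y) (hG : GoodSeq ℓ r M v)
    (hM : 3 * ℓ + 3 ≤ M) (hab : (α = 2 ∧ β ≠ 2) ∨ (α ≠ 2 ∧ β = 2)) :
    (w = 0 ∧ y = 1) ∨ (w = 1 ∧ y = 0) := by
  have hT : w ≠ y → ¬ (w = 2 ∨ y = 2) := by
    intro hwy h2
    exact hG.noT w y hwy h2 (fun i => ρ (3 * i) (3 * i + 1)) (fun j => 3 * j + 2)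
      (fun i hi => by omega) (fun i hi j hj => h.tri i j (by omega) (by omega))
  have hIl : w = y → α ≠ w → ¬ (α = 2 ∨ w = 2) := by
    intro hwy hα h2
    refine hG.noI α w hα h2 (fun i => ρ (2 * i) (2 * i + 1)) (fun j => 2 * j)
      (fun i hi => by omega) (fun i hi j hj => ?_)
    split_ifs with hij
    · subst hij
      exact h.left _ _ (by omega) (by omega)
    · rcases lt_or_gt_of_ne hij with h1 | h1
      · rw [hwy]; exact h.after _ _ _ (by omega) (by omega) (by omega)
      · exact h.before _ _ _ (by omega) (by omega) (by omega)
  have hIr : w = y → β ≠ w → ¬ (β = 2 ∨ w = 2) := by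
    intro hwy hα h2
    refine hG.noI β w hα h2 (fun i => ρ (2 * i) (2 * i + 1)) (fun j => 2 * j + 1)
      (fun i hi => by omega) (fun i hi j hj => ?_)
    split_ifs with hij
    · subst hij
      exact h.right _ _ (by omega) (by omega)
    · rcases lt_or_gt_of_ne hij with h1 | h1
      · rw [hwy]; exact h.after _ _ _ (by omega) (by omega) (by omega)
      · exact h.before _ _ _ (by omega) (by omega) (by omega)
  clear h hG
  revert w α β y
  decide

/-- Enough distinct rows of a given type. -/
theorem le_card_pairRows {m : ℕ} {v : ℕ → Fin m → Fin 3} {s t : ℕ} {a b : Fin 3} (K : ℕ)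
    (x : ℕ → Fin m) (hinj : ∀ i j, i < j → j < K → x i ≠ x j)
    (hx : ∀ i < K, v s (x i) = a ∧ v t (x i) = b) : K ≤ (pairRows v s t a b).card := by
  have : ((Finset.range K).image x).card = K := by
    rw [Finset.card_image_of_injOn, Finset.card_range]
    intro i hi j hj hij
    simp at hi hj
    rcases lt_trichotomy i j with h | h | h
    · exact absurd hij (hinj i j h hj)
    · exact h
    · exact absurd hij.symm (hinj j i h hi)
  rw [← this]
  apply Finset.card_le_card
  intro z hz
  simp only [Finset.mem_image, Finset.mem_range] at hz
  obtain ⟨i, hi, rfl⟩ := hz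
  simpa [pairRows] using hx i hi

/-- Counting rows in a triangular pattern. -/
theorem tri_count {m P : ℕ} {v : ℕ → Fin m → Fin 3} {x : ℕ → Fin m} {w y : Fin 3} (hwy : w ≠ y)
    (h : ∀ i < P, ∀ j < P, v j (x i) = if j < i then w else y) (K s t : ℕ) (hK : K ≤ s)
    (hst : s + K ≤ t) (ht : t + K < P) :
    K ≤ (pairRows v s t y y).card ∧ K ≤ (pairRows v s t w y).card ∧
      K ≤ (pairRows v s t w w).card := by
  have hinj : ∀ i j, i < j → j < P → x i ≠ x j := by
    intro i j hij hj he
    have h1 := h i (by omega) i (by omega)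
    have h2 := h j hj i (by omega)
    rw [he, h2] at h1
    simp [hij] at h1
    exact hwy h1
  refine ⟨le_card_pairRows K (fun i => x i) ?_ ?_, le_card_pairRows K (fun i => x (s + 1 + i)) ?_ ?_,
    le_card_pairRows K (fun i => x (t + 1 + i)) ?_ ?_⟩
  · exact fun i j h1 h2 => hinj _ _ h1 (by omega)
  · intro i hi
    rw [h _ (by omega) _ (by omega), h _ (by omega) _ (by omega), if_neg (by omega),
      if_neg (by omega)]
    simp
  · exact fun i j h1 h2 => hinj _ _ (by omega) (by omega)
  · intro i hi
    rw [h _ (by omega) _ (by omega), h _ (by omega) _ (by omega), if_pos (by omega),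
      if_neg (by omega)]
    simp
  · exact fun i j h1 h2 => hinj _ _ (by omega) (by omega)
  · intro i hi
    rw [h _ (by omega) _ (by omega), h _ (by omega) _ (by omega), if_pos (by omega),
      if_pos (by omega)]
    simp

theorem pairRows_swap {m : ℕ} (v : ℕ → Fin m → Fin 3) (s t : ℕ) (a b : Fin 3) :
    pairRows v s t a b = pairRows v t s b a := by
  ext x; simp [pairRows, and_comm]

/-- First step: many distinct 2-supports give many columns, each pair of which has many
rows of types `11`, `01`, `00`. -/
theorem step_one (ℓ r K M : ℕ) : ∃ n : ℕ, ∀ (m : ℕ) (v : ℕ → Fin m → Fin 3), GoodSeq ℓ r n v →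
    (∀ i j, i < j → j < n → ∃ x, (v i x = 2 ∧ v j x ≠ 2) ∨ (v i x ≠ 2 ∧ v j x = 2)) →
    ∃ v' : ℕ → Fin m → Fin 3, GoodSeq ℓ r M v' ∧ ∀ s t, s < t → t < M →
      K ≤ (pairRows v' s t 1 1).card ∧ K ≤ (pairRows v' s t 0 1).card ∧
      K ≤ (pairRows v' s t 0 0).card := by
  classical
  obtain ⟨P, hP⟩ : ∃ P, P = (M + 1) * (K + 1) + 1 := ⟨_, rfl⟩
  obtain ⟨n, hn⟩ := exists_homog (3 * ℓ + 3 + 3 * P)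
  refine ⟨n + 2, fun m v hG hd => ?_⟩
  obtain ⟨x0, -⟩ := hd 0 1 (by omega) (by omega)
  have hd' : ∀ i j, ∃ x, i < j → j < n + 2 →
      (v i x = 2 ∧ v j x ≠ 2) ∨ (v i x ≠ 2 ∧ v j x = 2) := by
    intro i j
    by_cases h : i < j ∧ j < n + 2
    · obtain ⟨x, hx⟩ := hd i j h.1 h.2
      exact ⟨x, fun _ _ => hx⟩
    · exact ⟨x0, fun h1 h2 => absurd ⟨h1, h2⟩ h⟩
  choose ρ hρ using hd'
  obtain ⟨g, hg, hlt, w, α, u, β, y, hH⟩ := hn m v ρ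
  have hG1 : GoodSeq ℓ r (3 * ℓ + 3 + 3 * P) (fun i => v (g i)) := by
    refine hG.comp g (fun i hi => by have := hg i hi; omega) ?_
    intro i j hi hj hij
    rcases lt_or_gt_of_ne hij with h | h
    · exact (hlt i j h hj).ne
    · exact (hlt j i h hi).ne'
  have hab : (α = 2 ∧ β ≠ 2) ∨ (α ≠ 2 ∧ β = 2) := by
    have h1 := hρ (g 0) (g 1) (hlt 0 1 (by omega) (by omega))
      (by have := hg 1 (by omega); omega)
    have h2 := hH.left 0 1 (by omega) (by omega)
    have h3 := hH.right 0 1 (by omega) (by omega)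
    rwa [h2, h3] at h1
  have hpat := hH.pattern hG1 (by omega) hab
  have htri := fun i (hi : i < P) j (hj : j < P) => hH.tri i j (by omega) (by omega)
  have hG2 : GoodSeq ℓ r P (fun j => v (g (3 * j + 2))) :=
    hG1.comp (fun j => 3 * j + 2) (fun i hi => by omega) (fun i j _ _ _ => by omega)
  have hd1 : ∀ i j, i < j → (i + 1) * (K + 1) + (K + 1) ≤ (j + 1) * (K + 1) := by
    intro i j hij
    have := Nat.mul_le_mul_right (K + 1) (show i + 1 + 1 ≤ j + 1 by omega)
    rw [Nat.add_mul (i + 1) 1] at this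
    omega
  have hd2 : ∀ i, i < M → (i + 1) * (K + 1) + K < P := by
    intro i hi
    have := hd1 i M hi
    omega
  have hd3 : ∀ i, K ≤ (i + 1) * (K + 1) := by
    intro i
    have := Nat.mul_le_mul_right (K + 1) (show 1 ≤ i + 1 by omega)
    omega
  rcases hpat with ⟨rfl, rfl⟩ | ⟨rfl, rfl⟩
  · refine ⟨fun j => v (g (3 * ((j + 1) * (K + 1)) + 2)),
      hG2.comp (fun j => (j + 1) * (K + 1)) (fun i hi => ?_) ?_, ?_⟩
    · have := hd2 i hi
      omega
    · intro i j hi hj hij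
      rcases lt_or_gt_of_ne hij with h | h
      · have := hd1 _ _ h
        omega
      · have := hd1 _ _ h
        omega
    · intro s t hst ht
      have h1 := hd1 s t hst
      have h2 := hd2 t ht
      exact tri_count (v := fun j => v (g (3 * j + 2))) (by decide) htri K _ _ (hd3 s)
        (by omega) h2
  · refine ⟨fun j => v (g (3 * ((M - 1 - j + 1) * (K + 1)) + 2)),
      hG2.comp (fun j => (M - 1 - j + 1) * (K + 1)) (fun i hi => ?_) ?_, ?_⟩
    · have := hd2 (M - 1 - i) (by omega)
      omega
    · intro i j hi hj hij
      rcases lt_or_gt_of_ne hij with h | h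
      · have := hd1 (M - 1 - j) (M - 1 - i) (by omega)
        omega
      · have := hd1 (M - 1 - i) (M - 1 - j) (by omega)
        omega
    · intro s t hst ht
      have h1 := hd1 (M - 1 - t) (M - 1 - s) (by omega)
      have h2 := hd2 (M - 1 - s) (by omega)
      have := tri_count (v := fun j => v (g (3 * j + 2))) (by decide) htri K _ _
        (hd3 (M - 1 - t)) (by omega) h2
      obtain ⟨h3, h4, h5⟩ := this
      refine ⟨?_, ?_, ?_⟩
      · rw [pairRows_swap]; exact h5
      · rw [pairRows_swap]; exact h4
      · rw [pairRows_swap]; exact h3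

/-- Equal column sums: few `10` rows force a `12` row. -/
theorem exists_one_two {m r : ℕ} {v : ℕ → Fin m → Fin 3} {s t : ℕ}
    (ho : (Finset.univ.filter (fun x => v s x = 1)).card =
      (Finset.univ.filter (fun x => v t x = 1)).card)
    (h01 : r + 1 ≤ (pairRows v s t 0 1).card) (h10 : (pairRows v s t 1 0).card < r) :
    ∃ x, v s x = 1 ∧ v t x = 2 := by
  by_contra hno
  push Not at hno
  have h1 : Finset.univ.filter (fun x => v s x = 1) ⊆ pairRows v s t 1 1 ∪ pairRows v s t 1 0 := by
    intro x hx
    have hx' : v s x = 1 := by simpa using hx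
    have := hno x hx'
    have h3 : v t x = 1 ∨ v t x = 0 := by
      generalize v t x = z at this
      revert z; decide
    simpa [pairRows, hx'] using h3
  have h2 : pairRows v s t 1 1 ∪ pairRows v s t 0 1 ⊆ Finset.univ.filter (fun x => v t x = 1) := by
    intro x hx
    simp [pairRows] at hx
    simp
    tauto
  have h3 : Disjoint (pairRows v s t 1 1) (pairRows v s t 0 1) := by
    rw [Finset.disjoint_left]
    intro x hx hx'
    simp [pairRows] at hx hx'
    have := hx.1.symm.trans hx'.1
    revert this; decide
  have h4 := Finset.card_le_card h1
  have h5 := Finset.card_le_card h2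
  rw [Finset.card_union_of_disjoint h3] at h5
  have h6 := Finset.card_union_le (pairRows v s t 1 1) (pairRows v s t 1 0)
  omega

theorem core_bound (ℓ r : ℕ) : ∃ n : ℕ, ∀ (m : ℕ) (v : ℕ → Fin m → Fin 3), GoodSeq ℓ r n v →
    ¬ (∀ i j, i < j → j < n → ∃ x, (v i x = 2 ∧ v j x ≠ 2) ∨ (v i x ≠ 2 ∧ v j x = 2)) := by
  classical
  obtain ⟨M, hM⟩ := exists_homog (3 * ℓ + 3 + 3 * (4 * r + 8))
  obtain ⟨n, hn⟩ := step_one ℓ r (r + 1) (M + 2)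
  refine ⟨n, fun m v0 hG0 hd => ?_⟩
  obtain ⟨v, hG, hc⟩ := hn m v0 hG0 hd
  have hq : ∀ s t, s < t → t < M + 2 → ∃ x, v s x = 1 ∧ v t x = 2 := by
    intro s t hst ht
    obtain ⟨h1, h2, h3⟩ := hc s t hst ht
    refine exists_one_two (hG.ones s t (by omega) ht) h2 ?_
    by_contra h
    exact hG.noF s t (by omega) ht (by omega) (by omega) (by omega) (by omega) (by omega)
  obtain ⟨x0, -⟩ := hq 0 1 (by omega) (by omega)
  have hq' : ∀ s t, ∃ x, s < t → t < M + 2 → v s x = 1 ∧ v t x = 2 := by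
    intro i j
    by_cases h : i < j ∧ j < M + 2
    · obtain ⟨x, hx⟩ := hq i j h.1 h.2
      exact ⟨x, fun _ _ => hx⟩
    · exact ⟨x0, fun h1 h2 => absurd ⟨h1, h2⟩ h⟩
  choose q hq using hq'
  obtain ⟨g, hg, hlt, w, α, u, β, y, hH⟩ := hM m v q
  have hG1 : GoodSeq ℓ r (3 * ℓ + 3 + 3 * (4 * r + 8)) (fun i => v (g i)) := by
    refine hG.comp g (fun i hi => by have := hg i hi; omega) ?_
    intro i j hi hj hij
    rcases lt_or_gt_of_ne hij with h | h
    · exact (hlt i j h hj).ne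
    · exact (hlt j i h hi).ne'
  have hc1 : ∀ s t, s < t → t < 3 * ℓ + 3 + 3 * (4 * r + 8) →
      (pairRows (fun i => v (g i)) s t 1 0).card < r := by
    intro s t hst ht
    obtain ⟨h1, h2, h3⟩ := hc (g s) (g t) (hlt s t hst ht) (by have := hg t ht; omega)
    by_contra h
    exact hG1.noF s t (by omega) ht (by omega) (le_trans (by omega) h1) (by omega)
      (le_trans (by omega) h2) (le_trans (by omega) h3)
  have h01 := hq (g 0) (g 1) (hlt 0 1 (by omega) (by omega))
      (by have := hg 1 (by omega); omega)
  have hα := hH.left 0 1 (by omega) (by omega)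
  have hβ := hH.right 0 1 (by omega) (by omega)
  rw [hα, hβ] at h01
  obtain ⟨rfl, rfl⟩ := h01
  rcases hH.pattern hG1 (by omega) (by decide) with ⟨rfl, rfl⟩ | ⟨rfl, rfl⟩
  · -- rows `0 … 0 1 u … u 2 1 … 1`
    have hu : u = 0 ∨ u = 1 ∨ u = 2 := by
      clear hH
      revert u; decide
    rcases hu with rfl | rfl | rfl
    · have hk := hc1 0 1 (by omega) (by omega)
      refine absurd hk (not_lt.2 (le_card_pairRows r (fun i => q (g 0) (g (i + 2))) ?_ ?_))
      · intro i j hij hj he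
        have h1 := hH.right 0 (i + 2) (by omega) (by omega)
        have h2 := hH.between 0 (i + 2) (j + 2) (by omega) (by omega) (by omega)
        rw [he, h2] at h1
        revert h1; decide
      · intro i hi
        exact ⟨hH.left 0 (i + 2) (by omega) (by omega),
          hH.between 0 1 (i + 2) (by omega) (by omega) (by omega)⟩
    · refine hG1.noI 2 1 (by decide) (by decide) (fun i => q (g 0) (g (i + 1))) (fun j => j + 1)
        (fun i hi => by omega) (fun i hi j hj => ?_)
      split_ifs with hij
      · subst hij
        exact hH.right 0 (i + 1) (by omega) (by omega)
      · rcases lt_or_gt_of_ne hij with h1 | h1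
        · exact hH.after 0 (i + 1) (j + 1) (by omega) (by omega) (by omega)
        · exact hH.between 0 (j + 1) (i + 1) (by omega) (by omega) (by omega)
    · refine hG1.noT 2 1 (by decide) (by decide) (fun i => q (g 0) (g (2 * i + 1)))
        (fun j => 2 * j + 2) (fun i hi => by omega) (fun i hi j hj => ?_)
      split_ifs with hij
      · exact hH.between 0 (2 * j + 2) (2 * i + 1) (by omega) (by omega) (by omega)
      · exact hH.after 0 (2 * i + 1) (2 * j + 2) (by omega) (by omega) (by omega)
  · have htri := fun i (hi : i < 4 * r + 8) j (hj : j < 4 * r + 8) =>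
      hH.tri i j (by omega) (by omega)
    have h1 := (tri_count (v := fun j => v (g (3 * j + 2))) (by decide) htri r r (2 * r + 1)
      (by omega) (by omega) (by omega)).2.1
    exact absurd (hc1 (3 * r + 2) (3 * (2 * r + 1) + 2) (by omega) (by omega)) (not_lt.2 h1)

/-! ### Boundedness and the final count -/

theorem simple_card_le {r m n : ℕ} (A : MatN m n) (hA : RMat r A) (hs : SimpleM A) :
    n ≤ r ^ m := by
  have := Fintype.card_le_of_injective
    (fun (j : Fin n) (i : Fin m) => (⟨A i j, hA i j⟩ : Fin r)) (by
      intro j₁ j₂ h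
      apply hs
      intro i
      simpa using congrFun h i)
  simpa using this

theorem le_forbmaxK {k m m' r n : ℕ} {𝓕 : Set CMat} (hm : m' ≤ m) (A : MatN m' n)
    (hA : RMat r A) (hs : SimpleM A) (hk : ∀ j, colSum A j = k) (hF : AvoidsFam A 𝓕) :
    n ≤ forbmaxK k m r 𝓕 := by
  have h1 : n ≤ forbK k m' r 𝓕 := by
    apply le_csSup
    · refine ⟨r ^ m', ?_⟩
      rintro x ⟨B, hB, hBs, -, -⟩
      exact simple_card_le B hB hBs
    · exact ⟨A, hA, hs, hk, hF⟩
  refine h1.trans (le_csSup ?_ ⟨m', hm, rfl⟩)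
  refine ⟨∑ i ∈ Finset.range (m + 1), forbK k i r 𝓕, ?_⟩
  rintro x ⟨i, hi, rfl⟩
  exact Finset.single_le_sum (f := fun i => forbK k i r 𝓕) (fun _ _ => Nat.zero_le _)
    (Finset.mem_range.2 (by omega))

/-- The rows in which column `j` has the entry 2. -/
def twoSupp {m n : ℕ} (A : MatN m n) (j : Fin n) : Finset (Fin m) :=
  Finset.univ.filter (fun i => A i j = 2)

theorem fiber_bound {k m n r : ℕ} (F : MatN r 2) (A : MatN m n) (hA : RMat 3 A) (hs : SimpleM A)
    (hF : ¬ IsConfig F A) (S : Finset (Fin m)) (J : Finset (Fin n))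
    (hJ : ∀ j ∈ J, colSum A j = k ∧ twoSupp A j = S) :
    J.card ≤ forbmaxK k m 2 {⟨r, 2, F⟩} := by
  classical
  let e := (Sᶜ).orderEmbOfFin rfl
  let e' := J.orderEmbOfFin rfl
  have he : ∀ i, e i ∉ S := fun i => by
    have := (Sᶜ).orderEmbOfFin_mem rfl i
    exact Finset.mem_compl.1 this
  have hesurj : ∀ x, x ∉ S → ∃ i, e i = x := by
    intro x hx
    have : x ∈ Set.range e := by
      rw [Finset.range_orderEmbOfFin]; simpa using hx
    exact this
  have he' : ∀ j, e' j ∈ J := fun j => J.orderEmbOfFin_mem rfl j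
  have htwo : ∀ x j, A x (e' j) = 2 ↔ x ∈ S := by
    intro x j
    rw [← (hJ _ (he' j)).2]
    simp [twoSupp]
  refine le_forbmaxK (m' := (Sᶜ).card) (by simpa using Finset.card_le_univ (Sᶜ))
    (fun i j => A (e i) (e' j)) ?_ ?_ ?_ ?_
  · intro i j
    have h1 := hA (e i) (e' j)
    have h2 : A (e i) (e' j) ≠ 2 := fun h => he i ((htwo _ _).1 h)
    show A (e i) (e' j) < 2
    omega
  · intro j₁ j₂ h
    apply e'.injective
    apply hs
    intro x
    by_cases hx : x ∈ S
    · rw [(htwo _ _).2 hx, (htwo _ _).2 hx]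
    · obtain ⟨i, rfl⟩ := hesurj x hx
      exact h i
  · intro j
    rw [← (hJ _ (he' j)).1]
    unfold colSum
    rw [← Finset.card_map e.toEmbedding]
    congr 1
    ext x
    simp only [Finset.mem_map, Finset.mem_filter, Finset.mem_univ, true_and]
    constructor
    · rintro ⟨i, hi, rfl⟩
      exact hi
    · intro hx
      obtain ⟨i, rfl⟩ := hesurj x (fun h => by
        have := (htwo x j).2 h
        omega)
      exact ⟨i, hx, rfl⟩
  · intro G hG
    rw [Set.mem_singleton_iff] at hG
    subst hG
    rintro ⟨f, g, hf, hg, h⟩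
    exact hF ⟨fun i => e (f i), fun j => e' (g j), e.injective.comp hf, e'.injective.comp hg, h⟩

/-- Assemble the configuration `F` from enough rows of every type. -/
theorem config_of_rows {m n r : ℕ} (F : MatN r 2) (hF : RMat 2 F) (A : MatN m n) (s t : Fin n)
    (hst : s ≠ t)
    (h : ∀ a b, a < 2 → b < 2 →
      r ≤ (Finset.univ.filter (fun x => A x s = a ∧ A x t = b)).card) :
    IsConfig F A := by
  classical
  have h' : ∀ p : Fin 2 × Fin 2, ∃ φ : Fin r → Fin m, Function.Injective φ ∧
      ∀ i, A (φ i) s = p.1 ∧ A (φ i) t = p.2 := by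
    rintro ⟨a, b⟩
    obtain ⟨T, hT, hc⟩ := Finset.exists_subset_card_eq (h a b a.2 b.2)
    refine ⟨T.orderEmbOfFin hc, (T.orderEmbOfFin hc).injective, fun i => ?_⟩
    have := hT (T.orderEmbOfFin_mem hc i)
    simpa using this
  choose φ hφ hv using h'
  let p : Fin r → Fin 2 × Fin 2 := fun i => (⟨F i 0, hF i 0⟩, ⟨F i 1, hF i 1⟩)
  refine ⟨fun i => φ (p i) i, ![s, t], ?_, ?_, ?_⟩
  · intro i j hij
    simp only at hij
    have h1 := hv (p i) i
    have h2 := hv (p j) j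
    rw [hij] at h1
    have hp : p i = p j := by
      ext
      · exact h1.1.symm.trans h2.1
      · exact h1.2.symm.trans h2.2
    rw [hp] at hij
    exact hφ _ hij
  · intro a b hab
    fin_cases a <;> fin_cases b <;> simp_all
  · intro i j
    have := hv (p i) i
    fin_cases j
    · simpa using this.1
    · simpa using this.2

theorem mem_family {ℓ a b : ℕ} (hℓ : 2 ≤ ℓ) (ha : a < 3) (hb : b < 3) (hab : a ≠ b)
    (h2 : a = 2 ∨ b = 2) :
    (⟨ℓ, ℓ, Imat ℓ a b⟩ : CMat) ∈ TFam ℓ 3 \ TFam ℓ 2 ∧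
    (⟨ℓ, ℓ, Tmat ℓ a b⟩ : CMat) ∈ TFam ℓ 3 \ TFam ℓ 2 := by
  have key : ∀ M : MatN ℓ ℓ, (∃ i j, M i j = 2) → (⟨ℓ, ℓ, M⟩ : CMat) ∉ TFam ℓ 2 := by
    rintro M ⟨i, j, hM⟩ ⟨a', b', ha', hb', -, h | h⟩
    · have : M = Imat ℓ a' b' := by simpa using h
      rw [this] at hM
      unfold Imat at hM
      split_ifs at hM <;> omega
    · have : M = Tmat ℓ a' b' := by simpa using h
      rw [this] at hM
      unfold Tmat at hM
      split_ifs at hM <;> omega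
  refine ⟨⟨⟨a, b, ha, hb, hab, Or.inl rfl⟩, key _ ?_⟩, ⟨⟨a, b, ha, hb, hab, Or.inr rfl⟩, key _ ?_⟩⟩
  · rcases h2 with rfl | rfl
    · exact ⟨⟨0, by omega⟩, ⟨0, by omega⟩, by simp [Imat]⟩
    · exact ⟨⟨0, by omega⟩, ⟨1, by omega⟩, by simp [Imat]⟩
  · rcases h2 with rfl | rfl
    · exact ⟨⟨1, by omega⟩, ⟨0, by omega⟩, by simp [Tmat]⟩
    · exact ⟨⟨0, by omega⟩, ⟨0, by omega⟩, by simp [Tmat]⟩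

/-- The sequence of columns extracted from an avoiding matrix is good. -/
theorem goodSeq_of_avoids {ℓ r m n N k : ℕ} (hℓ : 2 ≤ ℓ) (F : MatN r 2) (hF : RMat 2 F)
    (A : MatN m n) (hA : RMat 3 A)
    (hav : AvoidsFam A ((TFam ℓ 3 \ TFam ℓ 2) ∪ {⟨r, 2, F⟩})) (c : ℕ → Fin n)
    (hc : ∀ i j, i < N → j < N → i ≠ j → c i ≠ c j) (hk : ∀ i < N, colSum A (c i) = k) :
    GoodSeq ℓ r N (fun i x => (⟨A x (c i), hA x (c i)⟩ : Fin 3)) := by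
  have hval : ∀ (z : Fin 3) i x, (⟨A x (c i), hA x (c i)⟩ : Fin 3) = z ↔ A x (c i) = z := by
    intro z i x
    rw [Fin.ext_iff]
  have hb2 : ∀ a b : Fin 3, a ≠ b → (a = 2 ∨ b = 2) →
      ((a : ℕ) ≠ b ∧ ((a : ℕ) = 2 ∨ (b : ℕ) = 2)) := by decide
  refine ⟨?_, ?_, ?_, ?_⟩
  · intro a b hab h2 f g hg h
    obtain ⟨hab', h2'⟩ := hb2 a b hab h2
    refine hav _ (Or.inl (mem_family hℓ a.2 b.2 hab' h2').1)
      ⟨fun i => f i, fun j => c (g j), ?_, ?_, ?_⟩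
    · intro i j hij
      by_contra hne
      have h3 := h i i.2 i i.2
      have h4 := h j j.2 i i.2
      simp only at hij
      rw [← hij, h3, if_pos rfl, if_neg (fun e => hne (Fin.ext e.symm))] at h4
      exact hab h4
    · intro i j hij
      by_contra hne
      have h3 := h i i.2 i i.2
      have h4 := h i i.2 j j.2
      rw [hval] at h3 h4
      simp only at hij
      rw [hij, h4, if_pos rfl, if_neg (fun e => hne (Fin.ext e))] at h3
      exact hab' h3.symm
    · intro i j
      have h3 := h i i.2 j j.2
      rw [hval] at h3
      simp only [Imat, h3, Fin.ext_iff]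
      split_ifs <;> rfl
  · intro a b hab h2 f g hg h
    obtain ⟨hab', h2'⟩ := hb2 a b hab h2
    have hrow : ∀ i j : Fin ℓ, i < j → f i ≠ f j := by
      intro i j hij he
      have h3 := h i i.2 i i.2
      have h4 := h j j.2 i i.2
      rw [← he, h3, if_neg (by omega), if_pos (Fin.lt_def.1 hij)] at h4
      exact hab h4.symm
    have hcol : ∀ i j : Fin ℓ, i < j → c (g i) ≠ c (g j) := by
      intro i j hij he
      have h3 := h j j.2 i i.2
      have h4 := h j j.2 j j.2
      rw [hval] at h3 h4
      rw [he, h4, if_neg (by omega), if_pos (Fin.lt_def.1 hij)] at h3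
      exact hab' h3.symm
    refine hav _ (Or.inl (mem_family hℓ a.2 b.2 hab' h2').2)
      ⟨fun i => f i, fun j => c (g j), ?_, ?_, ?_⟩
    · intro i j hij
      rcases lt_trichotomy i j with h3 | h3 | h3
      · exact absurd hij (hrow i j h3)
      · exact h3
      · exact absurd hij.symm (hrow j i h3)
    · intro i j hij
      rcases lt_trichotomy i j with h3 | h3 | h3
      · exact absurd hij (hcol i j h3)
      · exact h3
      · exact absurd hij.symm (hcol j i h3)
    · intro i j
      have h3 := h i i.2 j j.2
      rw [hval] at h3
      simp only [Tmat, h3]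
      split_ifs <;> rfl
  · intro s t hs ht hst h11 h10 h01 h00
    refine hav _ (Or.inr rfl) (config_of_rows F hF A (c s) (c t) (hc s t hs ht hst) ?_)
    intro a b ha hb
    simp only [pairRows, hval] at h11 h10 h01 h00
    interval_cases a <;> interval_cases b <;> assumption
  · intro s t hs ht
    simp only [hval]
    exact (hk s hs).trans (hk t ht).symm

theorem stmt14 (ℓ : ℕ) (hℓ : 2 ≤ ℓ) (r : ℕ) (F : MatN r 2) (hF : RMat 2 F) :
    ∃ c : ℕ, ∀ m : ℕ, 1 ≤ m →
      forb m 3 ((TFam ℓ 3 \ TFam ℓ 2) ∪ {⟨r, 2, F⟩}) ≤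
        c * ∑ k ∈ Finset.range (m + 1), forbmaxK k m 2 {⟨r, 2, F⟩} := by
  classical
  obtain ⟨N, hN⟩ := core_bound ℓ r
  refine ⟨N, fun m _ => csSup_le' ?_⟩
  rintro n ⟨A, hA, hs, hav⟩
  have hsum : n = ∑ k ∈ Finset.range (m + 1),
      ((Finset.univ : Finset (Fin n)).filter (fun j => colSum A j = k)).card := by
    rw [← Finset.card_eq_sum_card_fiberwise (f := fun j => colSum A j)]
    · simp
    · intro j _
      have : colSum A j ≤ m := by
        unfold colSum
        exact (Finset.card_le_univ _).trans (by simp)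
      simpa using Nat.lt_succ_of_le this
  rw [Finset.mul_sum]
  refine hsum.le.trans (Finset.sum_le_sum fun k _ => ?_)
  set J := (Finset.univ : Finset (Fin n)).filter (fun j => colSum A j = k) with hJ
  have h1 : J.card ≤ forbmaxK k m 2 {⟨r, 2, F⟩} * (J.image (twoSupp A)).card := by
    apply Finset.card_le_mul_card_image
    intro S _
    apply fiber_bound F A hA hs (hav _ (Or.inr rfl)) S
    intro j hj
    simpa [hJ] using hj
  have h2 : (J.image (twoSupp A)).card ≤ N := by
    by_contra hlt
    push Not at hlt
    obtain ⟨T, hT, hTc⟩ := Finset.exists_subset_card_eq hlt.le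
    have hne : J.Nonempty := by
      rw [← Finset.image_nonempty (f := twoSupp A), ← Finset.card_pos]
      omega
    obtain ⟨j0, -⟩ := hne
    let e := T.equivFinOfCardEq hTc
    have hex : ∀ i : ℕ, ∃ j : Fin n, ∀ h : i < N,
        j ∈ J ∧ twoSupp A j = (e.symm ⟨i, h⟩ : Finset (Fin m)) := by
      intro i
      by_cases h : i < N
      · obtain ⟨j, hj, hj'⟩ := Finset.mem_image.1 (hT (e.symm ⟨i, h⟩).2)
        exact ⟨j, fun _ => ⟨hj, hj'⟩⟩
      · exact ⟨j0, fun h' => absurd h' h⟩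
    choose c hc using hex
    have hdist : ∀ i j, i < N → j < N → i ≠ j → twoSupp A (c i) ≠ twoSupp A (c j) := by
      intro i j hi hj hij he
      rw [(hc i hi).2, (hc j hj).2] at he
      have := e.symm.injective (Subtype.ext he)
      exact hij (by simpa using this)
    refine hN m _ (goodSeq_of_avoids (N := N) (k := k) hℓ F hF A hA hav c
      (fun i j hi hj hij he => hdist i j hi hj hij (by rw [he])) ?_) ?_
    · intro i hi
      have := (hc i hi).1
      simpa [hJ] using this
    · intro i j hij hj
      by_contra hno
      push Not at hno
      apply hdist i j (by omega) hj (by omega)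
      ext x
      have h3 := hno x
      simp only [Fin.ext_iff, ne_eq] at h3
      simp only [twoSupp, Finset.mem_filter, Finset.mem_univ, true_and]
      have h4 : ((2 : Fin 3) : ℕ) = 2 := rfl
      rw [h4] at h3
      tauto
  calc J.card ≤ _ := h1
    _ ≤ forbmaxK k m 2 {⟨r, 2, F⟩} * N := Nat.mul_le_mul_left _ h2
    _ = _ := Nat.mul_comm _ _
end

section
/- Let ℓ ≥ 2. Then there is a constant c such that for all m ≥ 2, forb(m, 3, (𝒯_ℓ(3) \ 𝒯_ℓ(2)) ∪ {F_{1,1,1,1}}) ≤ c · m · log m; that is, forb(m, 3, (𝒯_ℓ(3) \ 𝒯_ℓ(2)) ∪ {F_{1,1,1,1}}) is O(m log m). -/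
lemma pivot {κ ρ : Type*} [Nonempty ρ] (Q : κ → ρ → κ → Prop) (X : Finset κ) (h : ℕ → ℕ)
    (step : ∀ M, ∀ S ⊆ X, h M ≤ S.card →
      ∃ x ∈ S, ∃ r, ∃ S' ⊆ S, M ≤ S'.card ∧ ∀ y ∈ S', Q x r y) :
    ∀ L, ∀ S ⊆ X, h^[L] 1 ≤ S.card →
      ∃ x : ℕ → κ, ∃ r : ℕ → ρ, (∀ i, x i ∈ S) ∧ ∀ i < L, ∀ j, i < j → Q (x i) (r i) (x j) := by
  intro L
  induction L with
  | zero =>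
    intro S _ hS
    obtain ⟨s, hs⟩ : S.Nonempty := by
      rw [← Finset.card_pos]; simpa using hS
    exact ⟨fun _ => s, fun _ => Classical.arbitrary ρ, fun _ => hs, by simp⟩
  | succ L ih =>
    intro S hSX hS
    rw [Function.iterate_succ_apply'] at hS
    obtain ⟨x, hx, r, S', hS', hM, hQ⟩ := step _ S hSX hS
    obtain ⟨xs, rs, h1, h2⟩ := ih S' (hS'.trans hSX) hM
    refine ⟨fun i => Nat.casesOn i x xs, fun i => Nat.casesOn i r rs, ?_, ?_⟩
    · intro i
      cases i with
      | zero => exact hx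
      | succ i => exact hS' (h1 i)
    · intro i hi j hij
      cases j with
      | zero => omega
      | succ j =>
        cases i with
        | zero => exact hQ _ (h1 j)
        | succ i => exact h2 i (by omega) j (by omega)

lemma ramsey_pairs (γ : Type) [Fintype γ] [Nonempty γ] [DecidableEq γ] (L : ℕ) :
    ∃ N : ℕ, ∀ col : ℕ → ℕ → γ, ∃ g : ℕ → ℕ, ∃ c : γ, (∀ i < L, g i < N) ∧
      ∀ i j, i < j → j < L → g i < g j ∧ col (g i) (g j) = c := by
  set q := Fintype.card γ with hq
  refine ⟨(fun M => q * M + 1)^[q * L] 1, fun col => ?_⟩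
  set N := (fun M => q * M + 1)^[q * L] 1
  obtain ⟨x, r, h1, h2⟩ := pivot (fun x (r : γ) y => x < y ∧ col x y = r) (Finset.range N)
    (fun M => q * M + 1) (by
      intro M S _ hS
      have hne : S.Nonempty := by
        rw [← Finset.card_pos]; omega
      refine ⟨S.min' hne, S.min'_mem hne, ?_⟩
      have hc : (S.erase (S.min' hne)).card = S.card - 1 :=
        Finset.card_erase_of_mem (S.min'_mem hne)
      obtain ⟨r, -, hr⟩ := Finset.exists_le_card_fiber_of_mul_le_card_of_maps_to
        (s := S.erase (S.min' hne)) (t := (Finset.univ : Finset γ))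
        (f := fun y => col (S.min' hne) y) (n := M) (fun _ _ => Finset.mem_univ _)
        Finset.univ_nonempty (by
          rw [hc, Finset.card_univ, ← hq]; omega)
      refine ⟨r, _, ?_, hr, ?_⟩
      · exact (Finset.filter_subset _ _).trans (Finset.erase_subset _ _)
      · intro y hy
        rw [Finset.mem_filter, Finset.mem_erase] at hy
        exact ⟨lt_of_le_of_ne (S.min'_le y hy.1.2) (Ne.symm hy.1.1), hy.2⟩)
    (q * L) (Finset.range N) subset_rfl (by simp [N])
  obtain ⟨c, -, hc⟩ := Finset.exists_le_card_fiber_of_mul_le_card_of_maps_to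
    (s := Finset.range (q * L)) (t := (Finset.univ : Finset γ))
    (f := r) (n := L) (fun _ _ => Finset.mem_univ _)
    Finset.univ_nonempty (by simp [hq])
  set T := {x ∈ Finset.range (q * L) | r x = c}
  let e := T.orderEmbOfCardLe hc
  have he : ∀ i, e i < q * L ∧ r (e i) = c := by
    intro i
    have : e i ∈ T := T.orderEmbOfCardLe_mem hc i
    simpa [T] using this
  refine ⟨fun i => if h : i < L then x (e ⟨i, h⟩) else 0, c, ?_, ?_⟩
  · intro i hi
    simpa [hi] using h1 (e ⟨i, hi⟩)
  · intro i j hij hj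
    have hi : i < L := hij.trans hj
    have hlt : e ⟨i, hi⟩ < e ⟨j, hj⟩ := e.strictMono hij
    have := h2 _ (he ⟨i, hi⟩).1 _ hlt
    rw [(he ⟨i, hi⟩).2] at this
    simpa [hi, hj] using this

/-- No large `I` or `T` involving the symbol `2`. -/
def NoTI {ρ κ : Type*} (ℓ : ℕ) (A : ρ → κ → ℕ) : Prop :=
  (∀ i j, A i j < 3) ∧ ∀ a b, a < 3 → b < 3 → a ≠ b → (a = 2 ∨ b = 2) →
    ∀ (f : Fin ℓ → ρ) (g : Fin ℓ → κ),
      ¬ (∀ i j, A (f i) (g j) = Imat ℓ a b i j) ∧ ¬ (∀ i j, A (f i) (g j) = Tmat ℓ a b i j)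

lemma tri_exists (ℓ : ℕ) : ∃ N : ℕ, ∀ {ρ κ : Type} (A : ρ → κ → ℕ), NoTI ℓ A →
    ∀ (r : ℕ → ρ) (x : ℕ → κ), ∃ i j, i < j ∧ j < N ∧ A (r i) (x i) = A (r j) (x j) ∧
      ¬ (A (r j) (x i) = A (r i) (x j) ∧ A (r i) (x i) ≠ A (r i) (x j) ∧
          (A (r i) (x i) = 2 ∨ A (r i) (x j) = 2)) ∧
      ¬ (A (r j) (x i) ≠ A (r i) (x j) ∧ (A (r i) (x j) = 2 ∨ A (r j) (x i) = 2)) := by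
  obtain ⟨N, hN⟩ := ramsey_pairs (Fin 3 × Fin 3 × Fin 3) (2 * ℓ + 3)
  refine ⟨N, ?_⟩
  intro ρ κ A hA r x
  obtain ⟨g, ⟨a, b, c⟩, hg, hc⟩ := hN (fun i j =>
    (⟨A (r i) (x i), hA.1 _ _⟩, ⟨A (r i) (x j), hA.1 _ _⟩, ⟨A (r j) (x i), hA.1 _ _⟩))
  simp only [Prod.mk.injEq, Fin.ext_iff] at hc
  have ha : ∀ i, i < 2 * ℓ + 2 → A (r (g i)) (x (g i)) = a := fun i hi =>
    (hc i (i + 1) (by omega) (by omega)).2.1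
  have hb : ∀ i j, i < j → j < 2 * ℓ + 2 → A (r (g i)) (x (g j)) = b := fun i j hij hj =>
    (hc i j hij (by omega)).2.2.1
  have hcc : ∀ i j, i < j → j < 2 * ℓ + 2 → A (r (g j)) (x (g i)) = c := fun i j hij hj =>
    (hc i j hij (by omega)).2.2.2
  refine ⟨g 0, g 1, (hc 0 1 (by omega) (by omega)).1, hg 1 (by omega), ?_, ?_, ?_⟩
  · rw [ha 0 (by omega), ha 1 (by omega)]
  · rw [ha 0 (by omega), hb 0 1 (by omega) (by omega), hcc 0 1 (by omega) (by omega)]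
    rintro ⟨h1, h2, h3⟩
    refine (hA.2 a b a.2 b.2 h2 h3 (fun i => r (g i)) (fun i => x (g i))).1 ?_
    intro i j
    unfold Imat
    rcases lt_trichotomy i j with h | h | h
    · rw [if_neg h.ne, hb i j h (by omega)]
    · subst h; rw [if_pos rfl, ha i (by omega)]
    · rw [if_neg h.ne', hcc j i h (by omega), h1]
  · rw [hb 0 1 (by omega) (by omega), hcc 0 1 (by omega) (by omega)]
    rintro ⟨h2, h3⟩
    refine (hA.2 c b c.2 b.2 h2 h3.symm (fun i => r (g (2 * i))) (fun i => x (g (2 * i + 1)))).2 ?_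
    intro i j
    unfold Tmat
    split_ifs with h
    · rw [hcc _ _ (by omega) (by omega)]
    · rw [hb _ _ (by omega) (by omega)]

lemma same_bound (ℓ : ℕ) : ∃ C : ℕ, ∀ {ρ κ : Type} [Nonempty ρ] (A : ρ → κ → ℕ), NoTI ℓ A →
    ∀ (o z : ℕ), (∀ v < 3, v = o ∨ v = z ∨ v = 2) → 
    ∀ X : Finset κ, (∀ x ∈ X, ∀ y ∈ X, (∀ r, A r x = A r y) → x = y) →
    (∀ x ∈ X, ∀ y ∈ X, ∀ r, A r x = o → A r y = o) → X.card < C := by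
  obtain ⟨N, hN⟩ := tri_exists ℓ
  refine ⟨(fun M => 2 * M + 2)^[N] 1, ?_⟩
  intro ρ κ _ A hA o z hv X hX hO
  by_contra hcard
  push Not at hcard
  obtain ⟨x, r, h1, h2⟩ := pivot (fun x r y => A r x ≠ A r y) X (fun M => 2 * M + 2) (by
    intro M S hSX hS
    obtain ⟨x, hx, y, hy, hxy⟩ := Finset.one_lt_card.1 (show 1 < S.card by omega)
    have : ∃ r, A r x ≠ A r y := by
      by_contra hcon
      push Not at hcon
      exact hxy (hX x (hSX hx) y (hSX hy) hcon)
    obtain ⟨r, hr⟩ := this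
    have hsum := Finset.card_filter_add_card_filter_not (s := S) (fun s => A r s = A r x)
    by_cases hM : M ≤ (S.filter (fun s => A r s = A r x)).card
    · refine ⟨y, hy, r, _, Finset.filter_subset _ _, hM, ?_⟩
      intro s hs
      rw [Finset.mem_filter] at hs
      rw [hs.2]; exact hr.symm
    · refine ⟨x, hx, r, S.filter (fun s => ¬ A r s = A r x), Finset.filter_subset _ _,
        by omega, ?_⟩
      intro s hs
      rw [Finset.mem_filter] at hs
      exact fun h => hs.2 h.symm) N X subset_rfl hcard
  obtain ⟨i, j, hij, hj, h3, h4, h5⟩ := hN A hA r x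
  have hno : ∀ t < N, ∀ s, A (r t) (x s) ≠ o := by
    intro t ht s hs
    have e1 := hO _ (h1 s) _ (h1 t) _ hs
    have e2 := hO _ (h1 s) _ (h1 (t + 1)) _ hs
    exact h2 t ht (t + 1) (by omega) (e1.trans e2.symm)
  have hi : i < N := hij.trans hj
  have q1 := hno i hi i
  have q2 := hno i hi j
  have q3 := hno j hj i
  have q4 := h2 i hi j hij
  have w1 := hv _ (hA.1 (r i) (x i))
  have w2 := hv _ (hA.1 (r i) (x j))
  have w3 := hv _ (hA.1 (r j) (x i))
  grind

lemma type1_inner (ℓ M : ℕ) : ∃ C : ℕ, ∀ {ρ κ : Type} [Nonempty ρ] (A : ρ → κ → ℕ), NoTI ℓ A →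
    ∀ (o : ℕ), o ≠ 2 → ∀ (x : ℕ → κ) (X : Finset ℕ),
    (∀ i ∈ X, ∀ j ∈ X, i < j → ∃ r, A r (x i) = o ∧ A r (x j) = 2) →
    (∀ i ∈ X, ∀ j ∈ X, i < j → ∀ r, A r (x i) = o → A r (x j) = o ∨ A r (x j) = 2) →
    C ≤ X.card → ∃ i ∈ X, ∃ r, A r (x i) = o ∧
      M ≤ (X.filter (fun j => i < j ∧ A r (x j) = 2)).card := by
  obtain ⟨N, hN⟩ := tri_exists ℓ
  refine ⟨(fun K => K + M + 1)^[N] 1 + 1, ?_⟩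
  intro ρ κ _ A hA o ho x X hX1 hX2 hcard
  by_contra hcon
  push Not at hcon
  have hne : X.Nonempty := by rw [← Finset.card_pos]; omega
  set i0 := X.min' hne with hi0
  have hi0X : i0 ∈ X := X.min'_mem hne
  have hlt : ∀ j ∈ X.erase i0, i0 < j := by
    intro j hj
    rw [Finset.mem_erase] at hj
    exact lt_of_le_of_ne (X.min'_le j hj.2) (Ne.symm hj.1)
  have hsub : X.erase i0 ⊆ X := Finset.erase_subset _ _
  obtain ⟨y, r, h1, h2⟩ := pivot
    (fun s r t => A r (x i0) = o ∧ A r (x s) = 2 ∧ A r (x t) ≠ 2) (X.erase i0)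
    (fun K => K + M + 1) (by
      intro K S hS hc
      obtain ⟨s, hs⟩ : S.Nonempty := by rw [← Finset.card_pos]; omega
      have hs' := hS hs
      obtain ⟨r, hr1, hr2⟩ := hX1 i0 hi0X s (hsub hs') (hlt s hs')
      refine ⟨s, hs, r, S.filter (fun t => ¬ A r (x t) = 2), Finset.filter_subset _ _, ?_, ?_⟩
      · have hsum := Finset.card_filter_add_card_filter_not (s := S) (fun t => A r (x t) = 2)
        have hle : (S.filter (fun t => A r (x t) = 2)).card ≤
            (X.filter (fun j => i0 < j ∧ A r (x j) = 2)).card := by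
          apply Finset.card_le_card
          intro t ht
          rw [Finset.mem_filter] at ht ⊢
          exact ⟨hsub (hS ht.1), hlt t (hS ht.1), ht.2⟩
        have := hcon i0 hi0X r hr1
        omega
      · intro t ht
        rw [Finset.mem_filter] at ht
        exact ⟨hr1, hr2, ht.2⟩) N (X.erase i0) subset_rfl (by
          rw [Finset.card_erase_of_mem hi0X]; omega)
  obtain ⟨i, j, hij, hj, h3, h4, h5⟩ := hN A hA r (fun i => x (y i))
  have hi : i < N := hij.trans hj
  have q1 := h2 i hi j hij
  have q2 := h2 j hj (j + 1) (by omega)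
  have w2 := hX2 i0 hi0X (y j) (hsub (h1 j)) (hlt _ (h1 j)) (r i) q1.1
  have w3 := hX2 i0 hi0X (y i) (hsub (h1 i)) (hlt _ (h1 i)) (r j) q2.1
  grind

/-- A pivot sequence with a non-`2` on the diagonal and `2` afterwards is impossible. -/
lemma no_two_pivot (ℓ : ℕ) (h : ℕ → ℕ) : ∃ C : ℕ, ∀ {ρ κ κ' : Type} [Nonempty ρ] (A : ρ → κ → ℕ),
    NoTI ℓ A → ∀ (x : κ' → κ) (X : Finset κ'),
    (∀ M, ∀ S ⊆ X, h M ≤ S.card → ∃ i ∈ S, ∃ r, ∃ S' ⊆ S, M ≤ S'.card ∧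
      ∀ j ∈ S', A r (x i) ≠ 2 ∧ A r (x j) = 2) → X.card < C := by
  obtain ⟨N, hN⟩ := tri_exists ℓ
  refine ⟨h^[N] 1, ?_⟩
  intro ρ κ κ' _ A hA x X step
  by_contra hcard
  push Not at hcard
  obtain ⟨y, r, h1, h2⟩ := pivot (fun i r j => A r (x i) ≠ 2 ∧ A r (x j) = 2) X h step
    N X subset_rfl hcard
  obtain ⟨i, j, hij, hj, h3, h4, h5⟩ := hN A hA r (fun i => x (y i))
  have q1 := h2 i (hij.trans hj) j hij
  grind

lemma type1_bound (ℓ : ℕ) : ∃ C : ℕ, ∀ {ρ κ : Type} [Nonempty ρ] (A : ρ → κ → ℕ), NoTI ℓ A →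
    ∀ (o : ℕ), o ≠ 2 → ∀ (x : ℕ → κ) (X : Finset ℕ),
    (∀ i ∈ X, ∀ j ∈ X, i < j → ∃ r, A r (x i) = o ∧ A r (x j) = 2) →
    (∀ i ∈ X, ∀ j ∈ X, i < j → ∀ r, A r (x i) = o → A r (x j) = o ∨ A r (x j) = 2) →
    X.card < C := by
  choose h hh using type1_inner ℓ
  obtain ⟨C, hC⟩ := no_two_pivot ℓ h
  refine ⟨C, ?_⟩
  intro ρ κ _ A hA o ho x X hX1 hX2
  refine hC A hA x X ?_
  intro M S hS hc
  obtain ⟨i, hi, r, hr, hM⟩ := hh M A hA o ho x S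
    (fun i hi j hj => hX1 i (hS hi) j (hS hj)) (fun i hi j hj => hX2 i (hS hi) j (hS hj)) hc
  refine ⟨i, hi, r, _, Finset.filter_subset _ _, hM, ?_⟩
  intro j hj
  rw [Finset.mem_filter] at hj
  exact ⟨by rw [hr]; exact ho, hj.2.2⟩

lemma type3_bound (ℓ : ℕ) : ∃ C : ℕ, ∀ {ρ κ : Type} [Nonempty ρ] [Fintype ρ] (A : ρ → κ → ℕ),
    NoTI ℓ A → ∀ (o z k : ℕ), (∀ v < 3, v = o ∨ v = z ∨ v = 2) → o ≠ z → z ≠ 2 → 0 < k →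
    ∀ X : Finset κ,
    (∀ x ∈ X, (Finset.univ.filter (fun r => A r x = o)).card = k) →
    (∀ x ∈ X, k ≤ (Finset.univ.filter (fun r => A r x = z)).card) →
    (∀ x ∈ X, ∀ y ∈ X, x ≠ y → ∀ r, A r x = z → A r y ≠ z) → X.card < C := by
  classical
  obtain ⟨C, hC⟩ := no_two_pivot ℓ (fun M => M + 3)
  refine ⟨C, ?_⟩
  intro ρ κ _ _ A hA o z k hv hoz hz hk X hO hZ hdis
  refine hC A hA id X ?_
  intro M S hS hc
  have key : ∃ x ∈ S, ∃ r, A r x = z ∧ M ≤ (S.filter (fun y => A r y = 2)).card := by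
    by_contra hcon
    push Not at hcon
    -- count pairs
    have lower : ∀ x ∈ S, ∀ r ∈ Finset.univ.filter (fun r => A r x = z),
        2 ≤ (S.filter (fun y => A r y = o)).card := by
      intro x hx r hr
      rw [Finset.mem_filter] at hr
      have h1 := hcon x hx r hr.2
      have h2 : S ⊆ insert x (S.filter (fun y => A r y = o) ∪ S.filter (fun y => A r y = 2)) := by
        intro y hy
        by_cases hxy : x = y
        · simp [hxy]
        · have := hdis x (hS hx) y (hS hy) hxy r hr.2
          have := hv _ (hA.1 r y)
          simp only [Finset.mem_insert, Finset.mem_union, Finset.mem_filter]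
          tauto
      have h3 := Finset.card_le_card h2
      have h4 := Finset.card_insert_le x
        (S.filter (fun y => A r y = o) ∪ S.filter (fun y => A r y = 2))
      have h5 := Finset.card_union_le (S.filter (fun y => A r y = o))
        (S.filter (fun y => A r y = 2))
      omega
    set U := S.biUnion (fun x => Finset.univ.filter (fun r => A r x = z)) with hU
    have hUcard : S.card * k ≤ U.card := by
      rw [hU, Finset.card_biUnion]
      · rw [← smul_eq_mul]
        exact Finset.card_nsmul_le_sum _ _ _ (fun x hx => hZ x (hS hx))
      · intro x hx y hy hxy
        rw [Function.onFun, Finset.disjoint_left]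
        intro r hr hr'
        rw [Finset.mem_filter] at hr hr'
        exact hdis x (hS hx) y (hS hy) hxy r hr.2 hr'.2
    have h1 : U.card * 2 ≤ ∑ r ∈ U, (S.filter (fun y => A r y = o)).card := by
      rw [← smul_eq_mul]
      refine Finset.card_nsmul_le_sum _ _ _ ?_
      intro r hr
      rw [hU, Finset.mem_biUnion] at hr
      obtain ⟨x, hx, hr⟩ := hr
      exact lower x hx r hr
    have h2 : ∑ r ∈ U, (S.filter (fun y => A r y = o)).card =
        ∑ y ∈ S, (U.filter (fun r => A r y = o)).card :=
      Finset.sum_card_bipartiteAbove_eq_sum_card_bipartiteBelow (fun r y => A r y = o)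
    have h3 : ∑ y ∈ S, (U.filter (fun r => A r y = o)).card ≤ S.card * k := by
      rw [← smul_eq_mul]
      refine Finset.sum_le_card_nsmul _ _ _ ?_
      intro y hy
      rw [← hO y (hS hy)]
      exact Finset.card_le_card (Finset.filter_subset_filter _ (Finset.subset_univ _))
    have h4 : 0 < S.card * k := Nat.mul_pos (by omega) hk
    omega
  obtain ⟨x, hx, r, hr, hM⟩ := key
  refine ⟨x, hx, r, _, Finset.filter_subset _ _, hM, ?_⟩
  intro j hj
  rw [Finset.mem_filter] at hj
  exact ⟨by simp only [id]; rw [hr]; exact hz, hj.2⟩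

/-- Cross-freeness in the symbols `o`, `z`. -/
def FFree {ρ κ : Type*} (o z : ℕ) (A : ρ → κ → ℕ) : Prop :=
  ∀ x y, x ≠ y → (∃ r, A r x = o ∧ A r y = o) → (∃ r, A r x = o ∧ A r y = z) →
    (∃ r, A r x = z ∧ A r y = o) → (∃ r, A r x = z ∧ A r y = z) → False

lemma exists_sub {ρ κ : Type} [Fintype ρ] (A : ρ → κ → ℕ) (o k : ℕ) (x y : κ)
    (hx : (Finset.univ.filter (fun r => A r x = o)).card = k)
    (hy : (Finset.univ.filter (fun r => A r y = o)).card = k)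
    (hne : ¬ ∀ r, A r x = o ↔ A r y = o) : ∃ r, A r x = o ∧ A r y ≠ o := by
  by_contra hcon
  push Not at hcon
  have hsub : Finset.univ.filter (fun r => A r x = o) ⊆ Finset.univ.filter (fun r => A r y = o) := by
    intro r hr
    rw [Finset.mem_filter] at hr ⊢
    exact ⟨hr.1, hcon r hr.2⟩
  have heq := Finset.eq_of_subset_of_card_le hsub (by rw [hx, hy])
  apply hne
  intro r
  have := Finset.ext_iff.1 heq r
  simpa using this

lemma class_bound (ℓ : ℕ) : ∃ C : ℕ, ∀ {ρ κ : Type} [Nonempty ρ] [Fintype ρ] (A : ρ → κ → ℕ),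
    NoTI ℓ A → ∀ (o z k : ℕ) (p : ρ), (∀ v < 3, v = o ∨ v = z ∨ v = 2) → o ≠ z → z ≠ 2 → o ≠ 2 →
    FFree o z A → 0 < k → ∀ X : Finset κ,
    (∀ x ∈ X, ∀ y ∈ X, (∀ r, A r x = A r y) → x = y) →
    (∀ x ∈ X, (Finset.univ.filter (fun r => A r x = o)).card = k) →
    (∀ x ∈ X, k ≤ (Finset.univ.filter (fun r => A r x = z)).card) →
    (∀ x ∈ X, A p x = o) → X.card ≤ C := by
  classical
  obtain ⟨C0, h0⟩ := same_bound ℓ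
  obtain ⟨C1, h1⟩ := type1_bound ℓ
  obtain ⟨C3, h3⟩ := type3_bound ℓ
  set L := C0 + C1 + C3 with hL
  obtain ⟨N, hN⟩ := ramsey_pairs (Fin 4) L
  refine ⟨N, ?_⟩
  intro ρ κ _ _ A hA o z k p hv hoz hz2 ho2 hF hk X hX hO hZ hp
  by_contra hcard
  push Not at hcard
  obtain ⟨s, hs⟩ : X.Nonempty := by rw [← Finset.card_pos]; omega
  -- enumerate
  let x : ℕ → κ := fun i => if h : i < X.card then (X.equivFin.symm ⟨i, h⟩ : κ) else s
  have hxX : ∀ i, x i ∈ X := by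
    intro i
    simp only [x]
    split_ifs with h
    · exact (X.equivFin.symm ⟨i, h⟩).2
    · exact hs
  have hxinj : ∀ i j, i < N → j < N → x i = x j → i = j := by
    intro i j hi hj hij
    simp only [x, dif_pos (hi.trans hcard), dif_pos (hj.trans hcard)] at hij
    have := X.equivFin.symm.injective (Subtype.ext hij)
    simpa using this
  obtain ⟨g, c, hg, hc⟩ := hN (fun i j =>
    if (∀ r, A r (x i) = o ↔ A r (x j) = o) then 0
    else if (∀ r, A r (x i) = o → A r (x j) ≠ z) then 1
    else if (∀ r, A r (x i) = z → A r (x j) ≠ o) then 2 else 3)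
  have hyinj : ∀ i j, i < L → j < L → x (g i) = x (g j) → i = j := by
    intro i j hi hj hij
    have h := hxinj _ _ (hg i hi) (hg j hj) hij
    rcases lt_trichotomy i j with h' | h' | h'
    · have := (hc i j h' hj).1; omega
    · exact h'
    · have := (hc j i h' hi).1; omega
  set Y := (Finset.range L).image (fun i => x (g i)) with hY
  have hYcard : Y.card = L := by
    rw [hY, Finset.card_image_of_injOn, Finset.card_range]
    intro i hi j hj hij
    exact hyinj i j (by simpa using hi) (by simpa using hj) hij
  have hYX : Y ⊆ X := by
    intro y hy
    rw [hY, Finset.mem_image] at hy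
    obtain ⟨i, -, rfl⟩ := hy
    exact hxX _
  -- a symmetric pairwise property transfers to `Y`
  have hYpair : ∀ P : κ → κ → Prop, (∀ a b, P a b → P b a) →
      (∀ i j, i < j → j < L → P (x (g i)) (x (g j))) →
      ∀ a ∈ Y, ∀ b ∈ Y, a ≠ b → P a b := by
    intro P hsymm hP a ha b hb hab
    rw [hY, Finset.mem_image] at ha hb
    obtain ⟨i, hi, rfl⟩ := ha
    obtain ⟨j, hj, rfl⟩ := hb
    rw [Finset.mem_range] at hi hj
    rcases lt_trichotomy i j with h' | h' | h'
    · exact hP i j h' hj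
    · subst h'; exact absurd rfl hab
    · exact hsymm _ _ (hP j i h' hi)
  have hsub : ∀ i j, ¬ (∀ r, A r (x i) = o ↔ A r (x j) = o) → ∃ r, A r (x i) = o ∧ A r (x j) ≠ o :=
    fun i j h => exists_sub A o k _ _ (hO _ (hxX i)) (hO _ (hxX j)) h
  have hc4 : c = 0 ∨ c = 1 ∨ c = 2 ∨ c = 3 := by
    have hall : ∀ d : Fin 4, d = 0 ∨ d = 1 ∨ d = 2 ∨ d = 3 := by decide
    exact hall c
  rcases hc4 with rfl | rfl | rfl | rfl
  · -- same ones
    have hs0 := hYpair (fun a b => ∀ r, A r a = o ↔ A r b = o)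
      (fun a b h r => (h r).symm) (by
        intro i j hij hj
        have := (hc i j hij hj).2
        split_ifs at this with e1 e2 e3 <;> first | exact absurd this (by decide) | exact e1)
    have := h0 A hA o z hv Y (fun a ha b hb => hX a (hYX ha) b (hYX hb)) (by
      intro a ha b hb r hr
      by_cases hab : a = b
      · rw [← hab]; exact hr
      · exact (hs0 a ha b hb hab r).1 hr)
    omega
  · have hs1 : ∀ i j, i < j → j < L → (¬ ∀ r, A r (x (g i)) = o ↔ A r (x (g j)) = o) ∧
        ∀ r, A r (x (g i)) = o → A r (x (g j)) ≠ z := by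
      intro i j hij hj
      have := (hc i j hij hj).2
      split_ifs at this with e1 e2 e3 <;> first | exact absurd this (by decide) | exact ⟨e1, e2⟩
    have := h1 A hA o ho2 (fun i => x (g i)) (Finset.range L) (by
      intro i hi j hj hij
      rw [Finset.mem_range] at hj
      obtain ⟨e1, e2⟩ := hs1 i j hij hj
      obtain ⟨r, hr1, hr2⟩ := hsub _ _ e1
      have := e2 r hr1
      have := hv _ (hA.1 r (x (g j)))
      exact ⟨r, hr1, by tauto⟩) (by
      intro i hi j hj hij r hr
      rw [Finset.mem_range] at hj
      have := (hs1 i j hij hj).2 r hr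
      have := hv _ (hA.1 r (x (g j)))
      tauto)
    rw [Finset.card_range] at this
    omega
  · have hs1 : ∀ i j, i < j → j < L → (¬ ∀ r, A r (x (g i)) = o ↔ A r (x (g j)) = o) ∧
        ∀ r, A r (x (g i)) = z → A r (x (g j)) ≠ o := by
      intro i j hij hj
      have := (hc i j hij hj).2
      split_ifs at this with e1 e2 e3 <;> first | exact absurd this (by decide) | exact ⟨e1, e3⟩
    have := h1 A hA o ho2 (fun i => x (g (L - 1 - i))) (Finset.range L) (by
      intro i hi j hj hij
      rw [Finset.mem_range] at hj
      obtain ⟨e1, e2⟩ := hs1 (L - 1 - j) (L - 1 - i) (by omega) (by omega)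
      obtain ⟨r, hr1, hr2⟩ := hsub (g (L - 1 - i)) (g (L - 1 - j)) (fun h => e1 fun r => (h r).symm)
      have := e2 r
      have := hv _ (hA.1 r (x (g (L - 1 - j))))
      exact ⟨r, hr1, by tauto⟩) (by
      intro i hi j hj hij r hr
      rw [Finset.mem_range] at hj
      have := (hs1 (L - 1 - j) (L - 1 - i) (by omega) (by omega)).2 r
      have := hv _ (hA.1 r (x (g (L - 1 - j))))
      tauto)
    rw [Finset.card_range] at this
    omega
  · have hs3 := hYpair (fun a b => ∀ r, A r a = z → A r b ≠ z)
      (fun a b h r hb ha => h r ha hb) (by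
        intro i j hij hj r hr1 hr2
        have := (hc i j hij hj).2
        split_ifs at this with e1 e2 e3 <;> try exact absurd this (by decide)
        push Not at e2 e3
        refine hF (x (g i)) (x (g j)) (fun h => ?_) ⟨p, hp _ (hxX _), hp _ (hxX _)⟩ e2 e3
          ⟨r, hr1, hr2⟩
        have := hyinj i j (hij.trans hj) hj h
        omega)
    have := h3 A hA o z k hv hoz hz2 hk Y (fun a ha => hO a (hYX ha)) (fun a ha => hZ a (hYX ha)) hs3
    omega

lemma half_bound (ℓ : ℕ) : ∃ C : ℕ, ∀ {ρ κ : Type} [Nonempty ρ] [Fintype ρ] (A : ρ → κ → ℕ),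
    NoTI ℓ A → ∀ (o z : ℕ), (∀ v < 3, v = o ∨ v = z ∨ v = 2) → o ≠ z → z ≠ 2 → o ≠ 2 →
    FFree o z A → ∀ X : Finset κ,
    (∀ x ∈ X, ∀ y ∈ X, (∀ r, A r x = A r y) → x = y) →
    (∀ x ∈ X, (Finset.univ.filter (fun r => A r x = o)).card ≤
      (Finset.univ.filter (fun r => A r x = z)).card) →
    (X.card : ℝ) ≤ C + C * Fintype.card ρ * (1 + Real.log (Fintype.card ρ)) := by
  classical
  obtain ⟨C0, h0⟩ := same_bound ℓ
  obtain ⟨C1, h1⟩ := class_bound ℓ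
  refine ⟨C0 + C1, ?_⟩
  intro ρ κ _ _ A hA o z hv hoz hz2 ho2 hF X hX hOZ
  set m := Fintype.card ρ with hm
  set w : κ → ℕ := fun x => (Finset.univ.filter (fun r => A r x = o)).card with hw
  have hwm : ∀ x ∈ X, w x ∈ Finset.range (m + 1) := by
    intro x _
    rw [Finset.mem_range]
    exact Nat.lt_succ_of_le (Finset.card_le_univ _)
  have hsum := Finset.card_eq_sum_card_fiberwise hwm
  rw [Finset.sum_range_succ'] at hsum
  have hzero : (X.filter (fun x => w x = 0)).card ≤ C0 := by
    refine (h0 A hA o z hv _ ?_ ?_).le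
    · intro x hx y hy
      exact hX x (Finset.mem_filter.1 hx).1 y (Finset.mem_filter.1 hy).1
    · intro x hx y hy r hr
      exfalso
      have := (Finset.mem_filter.1 hx).2
      simp only [hw, Finset.card_eq_zero] at this
      have hmem : r ∈ Finset.univ.filter (fun r => A r x = o) := by simp [hr]
      rw [this] at hmem
      simp at hmem
  have hcl : ∀ k, (k + 1) * (X.filter (fun x => w x = k + 1)).card ≤ C1 * m := by
    intro k
    set Y := X.filter (fun x => w x = k + 1) with hY
    have hYX : Y ⊆ X := Finset.filter_subset _ _
    have hYw : ∀ y ∈ Y, w y = k + 1 := fun y hy => (Finset.mem_filter.1 hy).2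
    have e1 : (k + 1) * Y.card = ∑ y ∈ Y, ((Finset.univ : Finset ρ).filter (fun r => A r y = o)).card := by
      rw [Finset.sum_congr rfl hYw, Finset.sum_const, smul_eq_mul, mul_comm]
    have e2 : ∑ r ∈ (Finset.univ : Finset ρ), (Y.filter (fun y => A r y = o)).card =
        ∑ y ∈ Y, ((Finset.univ : Finset ρ).filter (fun r => A r y = o)).card :=
      Finset.sum_card_bipartiteAbove_eq_sum_card_bipartiteBelow (fun r y => A r y = o)
    rw [e1, ← e2, mul_comm, hm, ← Finset.card_univ, ← smul_eq_mul]
    refine Finset.sum_le_card_nsmul _ _ _ ?_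
    intro p _
    have hsub : Y.filter (fun y => A p y = o) ⊆ Y := Finset.filter_subset _ _
    refine h1 A hA o z (k + 1) p hv hoz hz2 ho2 hF (Nat.succ_pos k) _ ?_ ?_ ?_ ?_
    · exact fun x hx y hy => hX x (hYX (hsub hx)) y (hYX (hsub hy))
    · exact fun x hx => hYw x (hsub hx)
    · intro x hx
      have := hOZ x (hYX (hsub hx))
      have h' := hYw x (hsub hx)
      simp only [hw] at h'
      omega
    · exact fun x hx => (Finset.mem_filter.1 hx).2
  have hcl' : ∀ k ∈ Finset.range m, ((X.filter (fun x => w x = k + 1)).card : ℝ) ≤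
      C1 * m * ((k + 1 : ℝ))⁻¹ := by
    intro k _
    rw [← div_eq_mul_inv, le_div_iff₀ (by positivity), mul_comm]
    exact_mod_cast hcl k
  have hharm : (∑ k ∈ Finset.range m, ((k + 1 : ℝ))⁻¹) ≤ 1 + Real.log m := by
    have := harmonic_le_one_add_log m
    simpa [harmonic] using this
  have hlog : 0 ≤ 1 + Real.log m := by
    have := Real.log_natCast_nonneg m
    linarith
  have hX' : (X.card : ℝ) = ∑ k ∈ Finset.range m, ((X.filter (fun x => w x = k + 1)).card : ℝ) +
      ((X.filter (fun x => w x = 0)).card : ℝ) := by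
    rw [hsum]; push_cast; rfl
  rw [hX']
  have hz' : ((X.filter (fun x => w x = 0)).card : ℝ) ≤ C0 := by exact_mod_cast hzero
  have hs' := Finset.sum_le_sum hcl'
  rw [← Finset.mul_sum] at hs'
  have hs'' := mul_le_mul_of_nonneg_left hharm (show (0:ℝ) ≤ C1 * m by positivity)
  have e3 : (0:ℝ) ≤ C0 * m * (1 + Real.log m) := by positivity
  have e4 : (0:ℝ) ≤ C1 := by positivity
  push_cast
  nlinarith

lemma mem_TFam_two_lt (ℓ : ℕ) (M : CMat) (hM : M ∈ TFam ℓ 2) : ∀ i j, M.mat i j < 2 := by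
  obtain ⟨a, b, ha, hb, -, rfl | rfl⟩ := hM
  · intro i j; simp only [Imat]; split_ifs <;> assumption
  · intro i j; simp only [Tmat]; split_ifs <;> assumption

lemma noTI_of_avoids (ℓ : ℕ) (hℓ : 2 ≤ ℓ) {m n : ℕ} (A : MatN m n) (hA : RMat 3 A)
    (hav : AvoidsFam A (TFam ℓ 3 \ TFam ℓ 2)) : NoTI ℓ A := by
  refine ⟨hA, ?_⟩
  intro a b ha hb hab h2 f g
  have l0 : 0 < ℓ := by omega
  have l1 : 1 < ℓ := by omega
  constructor
  · intro h
    refine hav ⟨ℓ, ℓ, Imat ℓ a b⟩ ⟨⟨a, b, ha, hb, hab, Or.inl rfl⟩, ?_⟩ ⟨f, g, ?_, ?_, h⟩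
    · intro hmem
      have h3 := mem_TFam_two_lt _ _ hmem
      have h4 := h3 ⟨0, l0⟩ ⟨0, l0⟩
      have h5 := h3 ⟨0, l0⟩ ⟨1, l1⟩
      simp [Imat] at h4 h5
      omega
    · intro i i' hii
      by_contra hne
      have e1 := h i i
      have e2 := h i' i
      rw [← hii, e1] at e2
      simp [Imat, Ne.symm hne] at e2
      exact hab e2
    · intro i i' hii
      by_contra hne
      have e1 := h i i
      have e2 := h i i'
      rw [← hii, e1] at e2
      simp [Imat, hne] at e2
      exact hab e2
  · intro h
    refine hav ⟨ℓ, ℓ, Tmat ℓ a b⟩ ⟨⟨a, b, ha, hb, hab, Or.inr rfl⟩, ?_⟩ ⟨f, g, ?_, ?_, h⟩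
    · intro hmem
      have h3 := mem_TFam_two_lt _ _ hmem
      have h4 := h3 ⟨0, l0⟩ ⟨0, l0⟩
      have h5 := h3 ⟨1, l1⟩ ⟨0, l0⟩
      simp [Tmat] at h4 h5
      omega
    · have aux : ∀ i i' : Fin ℓ, i < i' → f i ≠ f i' := by
        intro i i' hlt hii
        have e1 := h i i
        have e2 := h i' i
        rw [← hii, e1] at e2
        have hlt' : (i : ℕ) < i' := hlt
        simp [Tmat, hlt'] at e2
        exact hab e2.symm
      intro i i' hii
      rcases lt_trichotomy i i' with h' | h' | h'
      · exact absurd hii (aux i i' h')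
      · exact h'
      · exact absurd hii.symm (aux i' i h')
    · have aux : ∀ i i' : Fin ℓ, i < i' → g i ≠ g i' := by
        intro i i' hlt hii
        have e1 := h i' i
        have e2 := h i' i'
        rw [← hii, e1] at e2
        have hlt' : (i : ℕ) < i' := hlt
        simp [Tmat, hlt'] at e2
        exact hab e2
      intro i i' hii
      rcases lt_trichotomy i i' with h' | h' | h'
      · exact absurd hii (aux i i' h')
      · exact h'
      · exact absurd hii.symm (aux i' i h')

lemma ffree_of_avoids {m n : ℕ} (A : MatN m n)
    (hav : ¬ IsConfig (Fabcd 1 1 1 1) A) : FFree 1 0 A := by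
  rintro x y hxy ⟨r1, h1, h1'⟩ ⟨r2, h2, h2'⟩ ⟨r3, h3, h3'⟩ ⟨r4, h4, h4'⟩
  refine hav ⟨(![r1, r2, r3, r4] : Fin 4 → Fin m), ![x, y], ?_, ?_, ?_⟩
  · have n12 : r1 ≠ r2 := by rintro rfl; omega
    have n13 : r1 ≠ r3 := by rintro rfl; omega
    have n14 : r1 ≠ r4 := by rintro rfl; omega
    have n23 : r2 ≠ r3 := by rintro rfl; omega
    have n24 : r2 ≠ r4 := by rintro rfl; omega
    have n34 : r3 ≠ r4 := by rintro rfl; omega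
    intro i j hij
    change Fin 4 at i j
    fin_cases i <;> fin_cases j <;> simp_all
  · intro i j hij
    fin_cases i <;> fin_cases j <;> simp_all
  · intro i j
    change Fin 4 at i
    fin_cases i <;> fin_cases j <;> simp_all [Fabcd]

lemma ffree_swap {ρ κ : Type*} {o z : ℕ} {A : ρ → κ → ℕ} (h : FFree o z A) : FFree z o A :=
  fun x y hxy h1 h2 h3 h4 => h x y hxy h4 h3 h2 h1

/-- For `ℓ ≥ 2`, `forb(m, 3, (𝒯_ℓ(3) \ 𝒯_ℓ(2)) ∪ {F_{1,1,1,1}})` is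
`O(m log m)`. -/
theorem stmt19 (ℓ : ℕ) (hℓ : 2 ≤ ℓ) :
    ∃ c : ℝ, ∀ m : ℕ, 2 ≤ m →
      (forb m 3 ((TFam ℓ 3 \ TFam ℓ 2) ∪ {⟨1 + 1 + 1 + 1, 2, Fabcd 1 1 1 1⟩}) : ℝ) ≤
        c * (m : ℝ) * Real.log (m : ℝ) := by

  obtain ⟨C, hC⟩ := half_bound ℓ
  refine ⟨10 * C, fun m hm => ?_⟩
  have hmpos : 0 < m := by omega
  have : Nonempty (Fin m) := ⟨⟨0, hmpos⟩⟩
  have hlog2 : (1 : ℝ) / 2 ≤ Real.log m := by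
    have h1 : Real.log 2 ≤ Real.log m :=
      Real.log_le_log (by norm_num) (by exact_mod_cast hm)
    have := Real.log_two_gt_d9
    linarith
  have hmR : (2 : ℝ) ≤ m := by exact_mod_cast hm
  have hCR : (0 : ℝ) ≤ C := by positivity
  have hmain : ∀ n ∈ { n : ℕ | ∃ A : MatN m n, RMat 3 A ∧ SimpleM A ∧ AvoidsFam A
      ((TFam ℓ 3 \ TFam ℓ 2) ∪ {⟨1 + 1 + 1 + 1, 2, Fabcd 1 1 1 1⟩}) },
      (n : ℝ) ≤ 10 * C * m * Real.log m := by
    rintro n ⟨A, hA, hS, hav⟩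
    have hT : NoTI ℓ A := noTI_of_avoids ℓ hℓ A hA (fun F hF => hav F (Or.inl hF))
    have hF : FFree 1 0 A := ffree_of_avoids A
      (hav ⟨1 + 1 + 1 + 1, 2, Fabcd 1 1 1 1⟩ (Or.inr rfl))
    have b1 := hC A hT 1 0 (by omega) (by omega) (by omega) (by omega) hF
      (Finset.univ.filter (fun x => (Finset.univ.filter (fun r => A r x = 1)).card ≤
        (Finset.univ.filter (fun r => A r x = 0)).card))
      (fun x _ y _ h => hS x y h) (fun x hx => (Finset.mem_filter.1 hx).2)
    have b2 := hC A hT 0 1 (by omega) (by omega) (by omega) (by omega) (ffree_swap hF)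
      (Finset.univ.filter (fun x => ¬ (Finset.univ.filter (fun r => A r x = 1)).card ≤
        (Finset.univ.filter (fun r => A r x = 0)).card))
      (fun x _ y _ h => hS x y h) (fun x hx => (not_le.1 (Finset.mem_filter.1 hx).2).le)
    have hsum := Finset.card_filter_add_card_filter_not (s := (Finset.univ : Finset (Fin n)))
      (fun x => (Finset.univ.filter (fun r => A r x = 1)).card ≤
        (Finset.univ.filter (fun r => A r x = 0)).card)
    rw [Finset.card_univ, Fintype.card_fin] at hsum
    rw [Fintype.card_fin] at b1 b2
    have hn : (n : ℝ) ≤ 2 * (C + C * m * (1 + Real.log m)) := by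
      rw [← hsum]; push_cast; linarith
    have k1 : (C : ℝ) ≤ C * m * (2 * Real.log m) := by
      have : (1 : ℝ) ≤ m * (2 * Real.log m) := by nlinarith
      nlinarith
    have k2 : (C : ℝ) * m ≤ C * m * (2 * Real.log m) := by
      have : (0 : ℝ) ≤ C * m := by positivity
      nlinarith
    nlinarith
  unfold forb
  set s := { n : ℕ | ∃ A : MatN m n, RMat 3 A ∧ SimpleM A ∧ AvoidsFam A
      ((TFam ℓ 3 \ TFam ℓ 2) ∪ {⟨1 + 1 + 1 + 1, 2, Fabcd 1 1 1 1⟩}) }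
  by_cases hne : s.Nonempty
  · have hbdd : BddAbove s := by
      refine ⟨⌊10 * C * m * Real.log m⌋₊, fun n hn => ?_⟩
      exact Nat.le_floor (hmain n hn)
    exact hmain _ (Nat.sSup_mem hne hbdd)
  · rw [Set.not_nonempty_iff_eq_empty.1 hne]
    simp only [csSup_empty, bot_eq_zero', Nat.cast_zero]
    positivity
end
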